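/- arXiv:1708.01481 — 7 statements merged into one kernel-verified Lean document; each statement's English description precedes it below -/
import Mathlib

section
/- Let B be a k×p real matrix and A a k×r real matrix such that every column of A lies in the column space of B. Let f : (0,∞)^p → ℝ^r be dimensionally covariant with respect to A and B. Let m = p − rank(B), let π_1, …, π_m be a basis of the null space {π ∈ ℝ^p : Bπ = 0}, and for each l = 1, …, r let y_l ∈ ℝ^p be a vector with B y_l = −a_l, where a_l is the l-th column of A. Then there exists a function h : (0,∞)^m → ℝ^r such that for every x ∈ (0,∞)^p and every l = 1, …, r, f(x)_l · ∏_{i=1}^p x_i^{(y_l)_i} = h_l( ∏_{i=1}^p x_i^{(π_1)_i}, …, ∏_{i=1}^p x_i^{(π_m)_i} ). (Multivariate Buckingham Π-Theorem, conclusions (i) and (iii): the functional relationship Y = f(x) can be rewritten entirely in terms of the p − rank(B) dimensionless predictors and r dimensionless responses.) -/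
theorem bpi_prod_rpow {n : ℕ} (x y : Fin n → ℝ) (hx : ∀ i, 0 < x i) :
    ∏ i, x i ^ y i = Real.exp (∑ i, Real.log (x i) * y i) := by
  rw [Real.exp_sum]
  exact Finset.prod_congr rfl fun i _ => Real.rpow_def_of_pos (hx i) _

/-- A vector orthogonal to the kernel of `B` lies in the row space of `B`. -/
theorem bpi_row_space {k p : ℕ} (B : Matrix (Fin k) (Fin p) ℝ) (v : Fin p → ℝ)
    (hv : ∀ u, B.mulVec u = 0 → v ⬝ᵥ u = 0) :
    ∃ w : Fin k → ℝ, ∀ i, v i = ∑ j, w j * B j i := by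
  have h : (dotProductBilin ℝ ℝ v : Module.Dual ℝ (Fin p → ℝ)) ∈
      (LinearMap.ker B.mulVecLin).dualAnnihilator := by
    rw [Submodule.mem_dualAnnihilator]
    intro u hu
    exact hv u (by simpa using hu)
  rw [← LinearMap.range_dualMap_eq_dualAnnihilator_ker] at h
  obtain ⟨ψ, hψ⟩ := h
  refine ⟨fun j => ψ (Pi.single j 1), fun i => ?_⟩
  have h1 := LinearMap.congr_fun hψ (Pi.single i 1)
  have h2 : v i = ψ (B.col i) := by
    have h3 : v ⬝ᵥ Pi.single i 1 = v i := by simp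
    rw [← h3]
    simpa [LinearMap.dualMap_apply] using h1.symm
  rw [h2, LinearMap.pi_apply_eq_sum_univ ψ (B.col i)]
  refine Finset.sum_congr rfl fun j _ => ?_
  have h4 : (fun a => if j = a then (1 : ℝ) else 0) = Pi.single j 1 := by
    ext a
    simp [Pi.single_apply, eq_comm]
  rw [h4, smul_eq_mul, mul_comm]
  rfl

/-- **Multivariate Buckingham Π-Theorem (conclusions (i) and (iii)).**
If every column of the response dimension matrix `A` lies in the column space of the
predictor dimension matrix `B`, and `f : (0,∞)^p → ℝ^r` is dimensionally covariant with
respect to `A` and `B`, then with `π_1, …, π_m` a basis of the null space of `B`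
(`m = p - rank B`) and `y_l` solving `B y_l = -a_l`, there is a function `h` expressing
every dimensionless response `f(x)_l ∏ᵢ xᵢ^{(y_l)ᵢ}` in terms of the dimensionless
predictor monomials `∏ᵢ xᵢ^{(π_t)ᵢ}`. -/
theorem multivariate_buckingham_pi
    (k p r m : ℕ)
    (B : Matrix (Fin k) (Fin p) ℝ) (A : Matrix (Fin k) (Fin r) ℝ)
    (hA : ∀ l : Fin r, (fun j => A j l) ∈ LinearMap.range B.mulVecLin)
    (f : (Fin p → ℝ) → (Fin r → ℝ))
    (hf : ∀ c : Fin k → ℝ, (∀ j, 0 < c j) → ∀ x : Fin p → ℝ, (∀ i, 0 < x i) →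
      ∀ l : Fin r,
        f (fun i => (∏ j, c j ^ B j i) * x i) l = (∏ j, c j ^ A j l) * f x l)
    (hm : m = p - B.rank)
    (π : Fin m → (Fin p → ℝ))
    (hπ_indep : LinearIndependent ℝ π)
    (hπ_span : Submodule.span ℝ (Set.range π) = LinearMap.ker B.mulVecLin)
    (y : Fin r → (Fin p → ℝ))
    (hy : ∀ l : Fin r, B.mulVec (y l) = fun j => -(A j l)) :
    ∃ h : (Fin m → ℝ) → (Fin r → ℝ),
      ∀ x : Fin p → ℝ, (∀ i, 0 < x i) → ∀ l : Fin r,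
        f x l * ∏ i, x i ^ y l i = h (fun t => ∏ i, x i ^ π t i) l := by
  classical
  have key : ∀ x x' : Fin p → ℝ, (∀ i, 0 < x i) → (∀ i, 0 < x' i) →
      (fun t => ∏ i, x i ^ π t i) = (fun t => ∏ i, x' i ^ π t i) → ∀ l,
      f x l * ∏ i, x i ^ y l i = f x' l * ∏ i, x' i ^ y l i := by
    intro x x' hx hx' hxx l
    obtain ⟨w, hw⟩ := bpi_row_space B (fun i => Real.log (x' i) - Real.log (x i)) (by
      intro u hu
      have hu' : u ∈ Submodule.span ℝ (Set.range π) := by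
        rw [hπ_span]
        simpa using hu
      induction hu' using Submodule.span_induction with
      | mem u h =>
        obtain ⟨t, rfl⟩ := h
        have h1 := congrFun hxx t
        simp only [bpi_prod_rpow _ _ hx, bpi_prod_rpow _ _ hx'] at h1
        have h2 := Real.exp_injective h1
        simp only [dotProduct, sub_mul, Finset.sum_sub_distrib]
        linarith
      | zero => simp
      | add a b ha hb iha ihb =>
        rw [hπ_span] at ha hb
        rw [dotProduct_add, iha (by simpa using ha), ihb (by simpa using hb), add_zero]
      | smul a b hb ih =>
        rw [hπ_span] at hb
        rw [dotProduct_smul, ih (by simpa using hb), smul_zero])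
    have hx'eq : x' = fun i => (∏ j, Real.exp (w j) ^ B j i) * x i := by
      ext i
      rw [bpi_prod_rpow _ _ fun j => Real.exp_pos _]
      simp only [Real.log_exp]
      rw [← hw i, Real.exp_sub, Real.exp_log (hx i), Real.exp_log (hx' i)]
      exact (div_mul_cancel₀ _ (hx i).ne').symm
    have hfx : f x' l = (∏ j, Real.exp (w j) ^ A j l) * f x l := by
      rw [hx'eq]
      exact hf _ (fun j => Real.exp_pos _) x hx l
    rw [hfx, bpi_prod_rpow _ _ hx, bpi_prod_rpow _ _ hx',
      bpi_prod_rpow _ _ fun j => Real.exp_pos (w j)]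
    simp only [Real.log_exp]
    have hsum : ∑ i, Real.log (x i) * y l i =
        ∑ j, w j * A j l + ∑ i, Real.log (x' i) * y l i := by
      have h1 : ∑ i, (Real.log (x' i) - Real.log (x i)) * y l i = -∑ j, w j * A j l := by
        have h2 : ∀ j, ∑ i, B j i * y l i = - A j l := fun j => congrFun (hy l) j
        calc _ = ∑ i, ∑ j, w j * (B j i * y l i) := by
              refine Finset.sum_congr rfl fun i _ => ?_
              rw [hw i, Finset.sum_mul]
              exact Finset.sum_congr rfl fun j _ => mul_assoc _ _ _
          _ = ∑ j, ∑ i, w j * (B j i * y l i) := Finset.sum_comm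
          _ = _ := by
              simp only [← Finset.mul_sum, h2, mul_neg, Finset.sum_neg_distrib]
      simp only [sub_mul, Finset.sum_sub_distrib] at h1
      linarith
    rw [hsum, Real.exp_add]
    ring
  refine ⟨fun z l => if hz : ∃ x : Fin p → ℝ, (∀ i, 0 < x i) ∧
      (fun t => ∏ i, x i ^ π t i) = z then
      f hz.choose l * ∏ i, hz.choose i ^ y l i else 0, fun x hx l => ?_⟩
  have hz : ∃ x' : Fin p → ℝ, (∀ i, 0 < x' i) ∧
      (fun t => ∏ i, x' i ^ π t i) = (fun t => ∏ i, x i ^ π t i) := ⟨x, hx, rfl⟩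
  simp only [dif_pos hz]
  exact key x _ hx hz.choose_spec.1 hz.choose_spec.2.symm l
end

section
/- Let B be a k×p real matrix, A a k×r real matrix, and g : ℝ^p → ℝ^r a function satisfying g(u + Bᵀ t) = g(u) + Aᵀ t for every u ∈ ℝ^p and t ∈ ℝ^k. Let m = p − rank(B), let π_1, …, π_m be a basis of the null space {π ∈ ℝ^p : Bπ = 0}, and for each l = 1, …, r let y_l ∈ ℝ^p satisfy B y_l = −a_l, where a_l is the l-th column of A. Then there exists a function h : ℝ^m → ℝ^r such that for every u ∈ ℝ^p and every l, g(u)_l + ⟨y_l, u⟩ = h_l(⟨π_1, u⟩, …, ⟨π_m, u⟩). (This is the Multivariate Buckingham Π-Theorem in logarithmic coordinates.) -/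
open Matrix

lemma exists_transpose_mulVec {k p : ℕ} (B : Matrix (Fin k) (Fin p) ℝ) (w : Fin p → ℝ)
    (hw : ∀ v ∈ LinearMap.ker B.mulVecLin, v ⬝ᵥ w = 0) :
    ∃ t : Fin k → ℝ, B.transpose.mulVec t = w := by
  have h1 : dotProductEquiv ℝ (Fin p) w ∈ LinearMap.range B.mulVecLin.dualMap := by
    rw [LinearMap.range_dualMap_eq_dualAnnihilator_ker, Submodule.mem_dualAnnihilator]
    intro v hv
    have := hw v hv
    rw [dotProduct_comm] at this
    simpa using this
  obtain ⟨ψ, hψ⟩ := h1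
  obtain ⟨t, rfl⟩ := (dotProductEquiv ℝ (Fin k)).surjective ψ
  refine ⟨t, (dotProductEquiv ℝ (Fin p)).injective ?_⟩
  rw [← hψ]
  apply LinearMap.ext
  intro v
  change (B.transpose.mulVec t) ⬝ᵥ v = t ⬝ᵥ (B.mulVec v)
  rw [mulVec_transpose, dotProduct_mulVec]

/-- **Multivariate Buckingham Π-Theorem in logarithmic coordinates.**
If `g : ℝ^p → ℝ^r` satisfies the translation covariance `g(u + Bᵀ t) = g(u) + Aᵀ t`,
then with `π_1, …, π_m` a basis of the null space of `B` (`m = p - rank B`) and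
`y_l` solving `B y_l = -a_l`, there exists `h : ℝ^m → ℝ^r` with
`g(u)_l + ⟨y_l, u⟩ = h_l(⟨π_1, u⟩, …, ⟨π_m, u⟩)`. -/
theorem multivariate_buckingham_pi_log
    (k p r m : ℕ)
    (B : Matrix (Fin k) (Fin p) ℝ) (A : Matrix (Fin k) (Fin r) ℝ)
    (g : (Fin p → ℝ) → (Fin r → ℝ))
    (hg : ∀ u : Fin p → ℝ, ∀ t : Fin k → ℝ,
      g (u + B.transpose.mulVec t) = g u + A.transpose.mulVec t)
    (hm : m = p - B.rank)
    (π : Fin m → (Fin p → ℝ))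
    (hπ_indep : LinearIndependent ℝ π)
    (hπ_span : Submodule.span ℝ (Set.range π) = LinearMap.ker B.mulVecLin)
    (y : Fin r → (Fin p → ℝ))
    (hy : ∀ l : Fin r, B.mulVec (y l) = fun j => -(A j l)) :
    ∃ h : (Fin m → ℝ) → (Fin r → ℝ),
      ∀ u : Fin p → ℝ, ∀ l : Fin r,
        g u l + y l ⬝ᵥ u = h (fun t => π t ⬝ᵥ u) l := by
  have key : Function.FactorsThrough (fun u : Fin p → ℝ => fun l => g u l + y l ⬝ᵥ u)
      (fun u : Fin p → ℝ => fun t => π t ⬝ᵥ u) := by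
    intro u v huv
    obtain ⟨t, ht⟩ := exists_transpose_mulVec B (u - v) (by
      intro x hx
      rw [← hπ_span] at hx
      induction hx using Submodule.span_induction with
      | mem x hx =>
        obtain ⟨i, rfl⟩ := hx
        have := congrFun huv i
        simp only at this
        rw [dotProduct_sub, this, sub_self]
      | zero => simp
      | add a b _ _ ha hb => rw [add_dotProduct, ha, hb, add_zero]
      | smul c a _ ha => rw [smul_dotProduct, ha, smul_zero])
    have hu : u = v + B.transpose.mulVec t := by rw [ht]; abel
    funext l
    have h2 : y l ⬝ᵥ (B.transpose.mulVec t) = - (A.transpose.mulVec t) l := by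
      rw [mulVec_transpose, dotProduct_comm, ← dotProduct_mulVec, hy l]
      simp [mulVec, dotProduct, mul_comm]
    simp only
    rw [hu, hg, dotProduct_add, h2, Pi.add_apply]
    ring
  refine ⟨Function.extend (fun u : Fin p → ℝ => fun t => π t ⬝ᵥ u)
    (fun u : Fin p → ℝ => fun l => g u l + y l ⬝ᵥ u) 0, fun u l => ?_⟩
  exact (congrFun (key.extend_apply 0 u) l).symm
end

section
/- Let B be a k×p real matrix and A a k×r real matrix, let f : (0,∞)^p → ℝ^r be dimensionally covariant with respect to A and B, and for each l = 1, …, r let y_l ∈ ℝ^p satisfy B y_l = −a_l, where a_l is the l-th column of A. If x, x′ ∈ (0,∞)^p are such that ∏_{i=1}^p x_i^{π_i} = ∏_{i=1}^p (x′_i)^{π_i} for every π ∈ ℝ^p with Bπ = 0, then for every l = 1, …, r, f(x)_l · ∏_{i=1}^p x_i^{(y_l)_i} = f(x′)_l · ∏_{i=1}^p (x′_i)^{(y_l)_i}. (The dimensionless responses are determined by the values of the dimensionless predictor monomials; this is the well-definedness of the reduced function h in the Multivariate Buckingham Π-Theorem.) -/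
/-- **Well-definedness of the reduced function in the Multivariate Buckingham Π-Theorem.**
If `f` is dimensionally covariant with respect to `A` and `B`, `B y_l = -a_l`, and two
positive points `x, x'` give equal values on every dimensionless predictor monomial
(exponent vectors `π` with `Bπ = 0`), then they give equal values for every dimensionless
response `f(x)_l ∏ᵢ xᵢ^{(y_l)ᵢ}`. -/
theorem buckingham_reduced_welldefined
    (k p r : ℕ)
    (B : Matrix (Fin k) (Fin p) ℝ) (A : Matrix (Fin k) (Fin r) ℝ)
    (f : (Fin p → ℝ) → (Fin r → ℝ))
    (hf : ∀ c : Fin k → ℝ, (∀ j, 0 < c j) → ∀ x : Fin p → ℝ, (∀ i, 0 < x i) →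
      ∀ l : Fin r,
        f (fun i => (∏ j, c j ^ B j i) * x i) l = (∏ j, c j ^ A j l) * f x l)
    (y : Fin r → (Fin p → ℝ))
    (hy : ∀ l : Fin r, B.mulVec (y l) = fun j => -(A j l))
    (x x' : Fin p → ℝ) (hx : ∀ i, 0 < x i) (hx' : ∀ i, 0 < x' i)
    (hmonos : ∀ π : Fin p → ℝ, B.mulVec π = 0 →
      (∏ i, x i ^ π i) = ∏ i, x' i ^ π i) :
    ∀ l : Fin r,
      f x l * ∏ i, x i ^ y l i = f x' l * ∏ i, x' i ^ y l i := by
  have hprod : ∀ z : Fin p → ℝ, (∀ i, 0 < z i) → ∀ w : Fin p → ℝ,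
      ∏ i, z i ^ w i = Real.exp (∑ i, w i * Real.log (z i)) := by
    intro z hz w
    rw [Real.exp_sum]
    refine Finset.prod_congr rfl fun i _ => ?_
    rw [Real.rpow_def_of_pos (hz i), mul_comm]
  have hexp : ∀ t w : Fin k → ℝ, ∏ j, Real.exp (t j) ^ w j = Real.exp (∑ j, w j * t j) := by
    intro t w
    rw [Real.exp_sum]
    refine Finset.prod_congr rfl fun j _ => ?_
    rw [← Real.exp_mul, mul_comm]
  let φ : Module.Dual ℝ (Fin p → ℝ) :=
    ∑ i, (Real.log (x' i) - Real.log (x i)) • LinearMap.proj i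
  have hφ : ∀ w, φ w = ∑ i, w i * Real.log (x' i) - ∑ i, w i * Real.log (x i) := by
    intro w
    rw [← Finset.sum_sub_distrib]
    simp only [φ, LinearMap.sum_apply, LinearMap.smul_apply, LinearMap.proj_apply, smul_eq_mul]
    exact Finset.sum_congr rfl fun i _ => by ring
  have hmem : φ ∈ (LinearMap.ker (Matrix.toLin' B)).dualAnnihilator := by
    rw [Submodule.mem_dualAnnihilator]
    intro w hw
    have hw' : B.mulVec w = 0 := by simpa using hw
    have h := hmonos w hw'
    rw [hprod x hx, hprod x' hx'] at h
    rw [hφ, Real.exp_injective h, sub_self]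
  rw [← LinearMap.range_dualMap_eq_dualAnnihilator_ker] at hmem
  obtain ⟨g, hg⟩ := hmem
  let t : Fin k → ℝ := fun j => g (Pi.single j 1)
  have hgt : ∀ v : Fin k → ℝ, g v = ∑ j, v j * t j := by
    intro v
    rw [LinearMap.pi_apply_eq_sum_univ g v]
    refine Finset.sum_congr rfl fun j _ => ?_
    rw [smul_eq_mul]
    congr 2
    ext a
    simp [Pi.single_apply, eq_comm]
  have hφB : ∀ w, φ w = ∑ j, B.mulVec w j * t j := by
    intro w
    rw [← hgt, ← hg]
    simp
  have hxx : (fun i => (∏ j, Real.exp (t j) ^ B j i) * x i) = x' := by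
    ext i
    have h := hφB (Pi.single i 1)
    rw [hφ] at h
    simp [Pi.single_apply] at h
    rw [hexp, ← h, Real.exp_sub, Real.exp_log (hx i), Real.exp_log (hx' i)]
    field_simp [(hx i).ne']
  intro l
  have h1 := hf (fun j => Real.exp (t j)) (fun j => Real.exp_pos _) x hx l
  rw [hxx, hexp] at h1
  have h2 := hφB (y l)
  rw [hφ, hy l] at h2
  simp only [neg_mul, Finset.sum_neg_distrib] at h2
  rw [h1, hprod x hx, hprod x' hx', mul_comm (Real.exp _) (f x l), mul_assoc, ← Real.exp_add]
  congr 2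
  linarith
end

section
/- Let B be a k×p real matrix and π ∈ ℝ^p an exponent vector. The monomial x ↦ ∏_{i=1}^p x_i^{π_i} is invariant under every scaling induced by B, i.e., ∏_{i=1}^p ((∏_{j=1}^k c_j^{B_{ji}}) x_i)^{π_i} = ∏_{i=1}^p x_i^{π_i} for all c ∈ (0,∞)^k and all x ∈ (0,∞)^p, if and only if Bπ = 0. -/
theorem scaled_monomial_eq
    (k p : ℕ) (B : Matrix (Fin k) (Fin p) ℝ) (π : Fin p → ℝ)
    (c : Fin k → ℝ) (hc : ∀ j, 0 < c j) (x : Fin p → ℝ) (hx : ∀ i, 0 < x i) :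
    (∏ i, ((∏ j, c j ^ B j i) * x i) ^ π i)
      = (∏ j, c j ^ (B.mulVec π j)) * ∏ i, x i ^ π i := by
  have h1 : ∀ i, ((∏ j, c j ^ B j i) * x i) ^ π i
      = (∏ j, c j ^ (B j i * π i)) * x i ^ π i := by
    intro i
    rw [Real.mul_rpow (Finset.prod_nonneg fun j _ => (Real.rpow_pos_of_pos (hc j) _).le) (hx i).le,
      ← Real.finsetProd_rpow _ _ (fun j _ => (Real.rpow_pos_of_pos (hc j) _).le)]
    congr 1
    exact Finset.prod_congr rfl fun j _ => (Real.rpow_mul (hc j).le _ _).symm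
  rw [Finset.prod_congr rfl fun i _ => h1 i, Finset.prod_mul_distrib, Finset.prod_comm]
  congr 1
  refine Finset.prod_congr rfl fun j _ => ?_
  rw [← Real.rpow_sum_of_pos (hc j)]
  rfl

/-- **Dimensionless monomials are exactly the null space of `B`.**
The monomial `x ↦ ∏ᵢ xᵢ^{πᵢ}` is invariant under every scaling induced by the dimension
matrix `B` if and only if `Bπ = 0`. -/
theorem monomial_dimensionless_iff
    (k p : ℕ) (B : Matrix (Fin k) (Fin p) ℝ) (π : Fin p → ℝ) :
    (∀ c : Fin k → ℝ, (∀ j, 0 < c j) → ∀ x : Fin p → ℝ, (∀ i, 0 < x i) →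
      (∏ i, ((∏ j, c j ^ B j i) * x i) ^ π i) = ∏ i, x i ^ π i)
    ↔ B.mulVec π = 0 := by
  constructor
  · intro h
    have h2 := h (fun j => Real.exp (B.mulVec π j)) (fun j => Real.exp_pos _)
      (fun _ => 1) (fun _ => one_pos)
    rw [scaled_monomial_eq k p B π _ (fun j => Real.exp_pos _) _ (fun _ => one_pos)] at h2
    simp only [Real.one_rpow, Finset.prod_const_one, mul_one, ← Real.exp_mul,
      ← Real.exp_sum, Real.exp_eq_one_iff] at h2
    rw [Finset.sum_eq_zero_iff_of_nonneg (fun j _ => mul_self_nonneg _)] at h2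
    funext j
    exact mul_self_eq_zero.mp (h2 j (Finset.mem_univ j))
  · intro h c hc x hx
    rw [scaled_monomial_eq k p B π c hc x hx, h]
    simp
end

section
/- Let B be a k×p real matrix and a ∈ ℝ^k a dimension vector. There exists an exponent vector ρ ∈ ℝ^p such that (∏_{j=1}^k c_j^{a_j}) · ∏_{i=1}^p (∏_{j=1}^k c_j^{B_{ji}})^{ρ_i} = 1 for every c ∈ (0,∞)^k, if and only if a lies in the column space of B. (A response with dimension vector a can be made dimensionless by multiplying it by a monomial in the predictors exactly when a ∈ span(B).) -/
theorem scaling_factor_eq (k p : ℕ) (B : Matrix (Fin k) (Fin p) ℝ) (a : Fin k → ℝ)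
    (ρ : Fin p → ℝ) (c : Fin k → ℝ) (hc : ∀ j, 0 < c j) :
    (∏ j, c j ^ a j) * ∏ i, (∏ j, c j ^ B j i) ^ ρ i = ∏ j, c j ^ (a j + (B.mulVec ρ) j) := by
  have h1 : ∀ i, (∏ j, c j ^ B j i) ^ ρ i = ∏ j, c j ^ (B j i * ρ i) := by
    intro i
    rw [← Real.finsetProd_rpow _ _ (fun j _ => (Real.rpow_pos_of_pos (hc j) _).le)]
    exact Finset.prod_congr rfl fun j _ => (Real.rpow_mul (hc j).le _ _).symm
  simp only [h1]
  rw [Finset.prod_comm, ← Finset.prod_mul_distrib]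
  refine Finset.prod_congr rfl fun j _ => ?_
  rw [Real.rpow_add (hc j), ← Real.rpow_sum_of_pos (hc j)]
  rfl

/-- **Nondimensionalizability of a response.**
A quantity with dimension vector `a` can be made dimensionless by multiplying it by a
monomial in the predictors (with dimension matrix `B`) if and only if `a` lies in the
column space of `B`. -/
theorem nondimensionalizable_iff_mem_span
    (k p : ℕ) (B : Matrix (Fin k) (Fin p) ℝ) (a : Fin k → ℝ) :
    (∃ ρ : Fin p → ℝ, ∀ c : Fin k → ℝ, (∀ j, 0 < c j) →
      (∏ j, c j ^ a j) * ∏ i, (∏ j, c j ^ B j i) ^ ρ i = 1)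
    ↔ a ∈ LinearMap.range B.mulVecLin := by
  constructor
  · rintro ⟨ρ, h⟩
    refine ⟨-ρ, ?_⟩
    ext j
    have hc : ∀ l, 0 < (if l = j then Real.exp 1 else 1 : ℝ) := by
      intro l
      split_ifs <;> positivity
    have h2 := h (fun l => if l = j then Real.exp 1 else 1) hc
    rw [scaling_factor_eq k p B a ρ _ hc, Finset.prod_eq_single j] at h2
    · simp only [if_true, Real.exp_one_rpow, Real.exp_eq_one_iff] at h2
      simp only [Matrix.mulVecLin_apply, Matrix.mulVec_neg, Pi.neg_apply]
      linarith
    · intro l _ hl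
      simp [hl]
    · simp
  · rintro ⟨x, rfl⟩
    refine ⟨-x, fun c hc => ?_⟩
    rw [scaling_factor_eq k p B _ _ c hc]
    simp [Matrix.mulVec_neg]
end

section
/- Let b ∈ ℝ^p with b_1 ≠ 0, let a ∈ ℝ^r, and let f : (0,∞)^p → ℝ^r satisfy the one-parameter covariance f(e^{b_1 ε} x_1, …, e^{b_p ε} x_p)_l = e^{a_l ε} f(x)_l for every ε ∈ ℝ, every x ∈ (0,∞)^p, and every l = 1, …, r. Then there exists a function F : (0,∞)^{p−1} → ℝ^r such that for every x ∈ (0,∞)^p and every l, f(x)_l = x_1^{a_l / b_1} · F_l( x_2 · x_1^{−b_2/b_1}, …, x_p · x_1^{−b_p/b_1} ). (This is the single-step elimination of one fundamental dimension used inductively in the proof of the Multivariate Buckingham Π-Theorem.) -/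
/-- **Single-step elimination of one fundamental dimension.**
If `b_1 ≠ 0` (here the first coordinate, indexed by `0 : Fin (p+1)`) and `f` satisfies the
one-parameter covariance `f(e^{b_1 ε} x_1, …, e^{b_p ε} x_p)_l = e^{a_l ε} f(x)_l`, then
there exists `F` with `f(x)_l = x_1^{a_l/b_1} · F_l(x_2 x_1^{-b_2/b_1}, …, x_p x_1^{-b_p/b_1})`. -/
theorem single_dimension_elimination
    (p r : ℕ) (b : Fin (p + 1) → ℝ) (hb : b 0 ≠ 0) (a : Fin r → ℝ)
    (f : (Fin (p + 1) → ℝ) → (Fin r → ℝ))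
    (hf : ∀ ε : ℝ, ∀ x : Fin (p + 1) → ℝ, (∀ i, 0 < x i) → ∀ l : Fin r,
      f (fun i => Real.exp (b i * ε) * x i) l = Real.exp (a l * ε) * f x l) :
    ∃ F : (Fin p → ℝ) → (Fin r → ℝ),
      ∀ x : Fin (p + 1) → ℝ, (∀ i, 0 < x i) → ∀ l : Fin r,
        f x l = x 0 ^ (a l / b 0) *
          F (fun i => x i.succ * x 0 ^ (-(b i.succ) / b 0)) l := by
  refine ⟨fun y => f (Fin.cons 1 y), fun x hx l => ?_⟩
  have h := hf (-(Real.log (x 0)) / b 0) x hx l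
  have key : (fun i => Real.exp (b i * (-(Real.log (x 0)) / b 0)) * x i) =
      (Fin.cons 1 (fun i : Fin p => x i.succ * x 0 ^ (-(b i.succ) / b 0)) :
        Fin (p + 1) → ℝ) := by
    funext i
    refine Fin.cases ?_ (fun j => ?_) i
    · have e : b 0 * (-(Real.log (x 0)) / b 0) = -(Real.log (x 0)) := by
        field_simp
      rw [e, Real.exp_neg, Real.exp_log (hx 0), Fin.cons_zero]
      exact inv_mul_cancel₀ (hx 0).ne'
    · rw [Fin.cons_succ, Real.rpow_def_of_pos (hx 0), mul_comm]
      congr 2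
      ring
  rw [key] at h
  show f x l = x 0 ^ (a l / b 0) * f (Fin.cons 1 _) l
  rw [h, Real.rpow_def_of_pos (hx 0), ← mul_assoc, ← Real.exp_add]
  have e : Real.log (x 0) * (a l / b 0) + a l * (-(Real.log (x 0)) / b 0) = 0 := by ring
  rw [e, Real.exp_zero, one_mul]
end

section
/- Let B be a k×p real matrix, A a k×r real matrix, and suppose there exists a function g : ℝ^p → ℝ^r satisfying g(u + Bᵀ t) = g(u) + Aᵀ t for every u ∈ ℝ^p and t ∈ ℝ^k. Then the column space of A is contained in the column space of B. (The compatibility assumption A ⊆ span(B) of the Multivariate Buckingham Π-Theorem is necessary for a dimensionally covariant relationship to exist.) -/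
/-- **Necessity of the compatibility assumption `A ⊆ span(B)`.**
If there exists `g : ℝ^p → ℝ^r` satisfying the translation covariance
`g(u + Bᵀ t) = g(u) + Aᵀ t` for all `u` and `t`, then the column space of `A` is contained
in the column space of `B`. -/
theorem covariance_implies_column_space_le
    (k p r : ℕ) (B : Matrix (Fin k) (Fin p) ℝ) (A : Matrix (Fin k) (Fin r) ℝ)
    (g : (Fin p → ℝ) → (Fin r → ℝ))
    (hg : ∀ u : Fin p → ℝ, ∀ t : Fin k → ℝ,
      g (u + B.transpose.mulVec t) = g u + A.transpose.mulVec t) :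
    LinearMap.range A.mulVecLin ≤ LinearMap.range B.mulVecLin := by
  rintro _ ⟨y, rfl⟩
  by_contra hx
  obtain ⟨f, hf, hf'⟩ := Submodule.exists_dual_map_eq_bot_of_notMem hx inferInstance
  obtain ⟨t, rfl⟩ := (dotProductEquiv ℝ (Fin k)).surjective f
  have hB : B.transpose.mulVec t = 0 := by
    rw [Matrix.mulVec_transpose]
    refine dotProduct_eq_zero _ fun w => ?_
    rw [← Matrix.dotProduct_mulVec]
    have h : (dotProductEquiv ℝ (Fin k) t) (B.mulVecLin w) ∈
        (LinearMap.range B.mulVecLin).map (dotProductEquiv ℝ (Fin k) t) :=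
      Submodule.mem_map_of_mem ⟨w, rfl⟩
    rw [hf'] at h
    simpa using h
  have hA : A.transpose.mulVec t = 0 := by
    have h := hg 0 t
    rw [hB, add_zero] at h
    exact (left_eq_add.mp h)
  apply hf
  rw [Matrix.mulVec_transpose] at hA
  simp [Matrix.dotProduct_mulVec, hA]
end
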